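/- There exist constants c > 0 and C < ∞, depending only on d, such that for any ball ℬ = ℬ(z̄, e, r, r*) and any Lebesgue measurable set E ⊆ π*(ℬ) of positive measure, ‖T(χ_E)‖_{L^{d+1,∞}} ≥ c (|E|/|π*(ℬ)|)^C |E|^{d/(d+1)}. -/

import Mathlib

open MeasureTheory ENNReal
open scoped RealInnerProductSpace

noncomputable section

/-- `ℝ^{d-1}` -/
abbrev Vec (n : ℕ) : Type := EuclideanSpace ℝ (Fin n)

/-- `ℝ^d = ℝ^{d-1} × ℝ`, a point `x = (x', x_d)` -/
abbrev Pt (n : ℕ) : Type := Vec n × ℝ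

/-- The Radon-like transform `Tf(x) = ∫_{ℝ^{d-1}} f(x' - t, x_d - |t|²) dt`. -/
def radonT (n : ℕ) (f : Pt n → ℝ≥0∞) (x : Pt n) : ℝ≥0∞ :=
  ∫⁻ t : Vec n, f (x.1 - t, x.2 - ‖t‖ ^ 2)

/-- The incidence functional `𝒯(E, E*) = ∫_E T(χ_{E*})`. -/
def incT (n : ℕ) (E Estar : Set (Pt n)) : ℝ≥0∞ :=
  ∫⁻ x in E, radonT n (Estar.indicator 1) x

/-- Admissibility of the parameters of a ball `ℬ(z̄, e, r, r*)`:
the center `z̄ = (x̄, x̄*)` lies on the incidence manifold `ℐ`, `ρ > 0`,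
`e` is an orthonormal basis of `ℝ^{d-1}`, and `r_j r*_j = ρ > 0` for all `j`. -/
def IsBallParams (n : ℕ) (zb : Pt n × Pt n) (e : Fin n → Vec n)
    (r rs : Fin n → ℝ) (ρ : ℝ) : Prop :=
  zb.2.2 = zb.1.2 - ‖zb.2.1 - zb.1.1‖ ^ 2 ∧ 0 < ρ ∧ Orthonormal ℝ e ∧
    (∀ j, 0 < r j) ∧ (∀ j, 0 < rs j) ∧ (∀ j, r j * rs j = ρ)

/-- The ball `ℬ(z̄, e, r, r*)`, a subset of the incidence manifold
`ℐ = {(x,y) : y_d = x_d - |y' - x'|²} ⊆ ℝ^d × ℝ^d`. -/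
def ballI (n : ℕ) (zb : Pt n × Pt n) (e : Fin n → Vec n)
    (r rs : Fin n → ℝ) (ρ : ℝ) : Set (Pt n × Pt n) :=
  fun z => z.2.2 = z.1.2 - ‖z.2.1 - z.1.1‖ ^ 2 ∧
    (∀ j, |⟪z.1.1 - zb.1.1, e j⟫| < r j) ∧
    |z.1.2 - zb.2.2 - ‖z.1.1 - zb.2.1‖ ^ 2| < ρ ∧
    (∀ j, |⟪z.2.1 - zb.2.1, e j⟫| < rs j) ∧
    |z.2.2 - zb.1.2 + ‖z.2.1 - zb.1.1‖ ^ 2| < ρ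

/-- The weak-type `L^{d+1,∞}` quasinorm `sup_{λ>0} λ |{g > λ}|^{1/(d+1)}`
of a nonnegative function `g`. -/
def weakN (n : ℕ) (q : ℝ) (g : Pt n → ℝ≥0∞) : ℝ≥0∞ :=
  ⨆ (lam : ℝ) (_ : 0 < lam),
    ENNReal.ofReal lam * volume {x : Pt n | ENNReal.ofReal lam < g x} ^ (1 / q)

/-!
Write `q = d + 1` and let `B`, `B*` be the boxes of half-widths `r`, `r*` about `x̄'` and `x̄*'`.
The projection `π*(ℬ)` is a vertical `ρ`-neighbourhood of a paraboloid over `B*`. Since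
`r_j r*_j = ρ`, expanding `|x' - y'|²` about the centre shows that for `y ∈ π*(ℬ)` and `x' ∈ B` the
point of the paraboloid of `y` above `x'` lies in a vertical neighbourhood `F` of width `O(ρ)` of a
fixed paraboloid over `B`. By duality `∫_F T χ_E = ∫_E T* χ_F ≥ |B| |E|`, while the weak-type Hölder
inequality bounds the left side by `O(‖T χ_E‖_{q,∞} |F|^{1 - 1/q})`. Because
`|B| |B*| = (4ρ)^{d-1}`, we have `|F|^{1 - 1/q} = O(|π*(ℬ)|^{1/q} |B|)`, so that
`|E| = O(‖T χ_E‖_{q,∞} |π*(ℬ)|^{1/q})`, which is the claim with `C = 1/q`.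
-/

section Powers

lemma div_rpow_mul_rpow_one_sub {p : ℝ} (hp₀ : 0 ≤ p) (hp₁ : p ≤ 1) (a b : ℝ≥0∞) :
    (a / b) ^ p * a ^ (1 - p) = a / b ^ p := by
  rw [ENNReal.div_rpow_of_nonneg _ _ hp₀, ENNReal.mul_comm_div, mul_comm, div_eq_mul_inv,
    div_eq_mul_inv, mul_right_comm, ← ENNReal.rpow_add_of_nonneg _ _ (by linarith) hp₀,
    sub_add_cancel, ENNReal.rpow_one]

lemma prod_ofReal_two_mul_mul_prod_ofReal_two_mul {ι : Type*} [Fintype ι] {r s : ι → ℝ} {ρ : ℝ}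
    (hr : ∀ j, 0 ≤ r j) (hrs : ∀ j, r j * s j = ρ) :
    (∏ j, ENNReal.ofReal (2 * r j)) * ∏ j, ENNReal.ofReal (2 * s j) =
      (4 * ENNReal.ofReal ρ) ^ Fintype.card ι := by
  have hj : ∀ j, ENNReal.ofReal (2 * r j) * ENNReal.ofReal (2 * s j) = 4 * ENNReal.ofReal ρ :=
    fun j => by
      rw [← ENNReal.ofReal_mul (by linarith [hr j]), ← ENNReal.ofReal_ofNat,
        ← ENNReal.ofReal_mul (by norm_num), ← hrs j]
      ring_nf
  rw [← Finset.prod_mul_distrib, Finset.prod_congr rfl fun j _ => hj j, Finset.prod_const,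
    Finset.card_univ]

lemma rpow_one_sub_le_of_mul_eq_pow {n : ℕ} {A β σ ρ : ℝ≥0∞} (hA : 1 ≤ A)
    (h : β * σ = (4 * ρ) ^ n) :
    (2 * (A * ρ) * β) ^ (1 - 1 / ((n : ℝ) + 2)) ≤ A * (2 * ρ * σ) ^ (1 / ((n : ℝ) + 2)) * β := by
  have hcast : (n : ℝ) + 2 = (n + 2 : ℕ) := by push_cast; rfl
  have hexp : 1 - 1 / ((n + 2 : ℕ) : ℝ) = (n + 1 : ℕ) * ((n + 2 : ℕ) : ℝ)⁻¹ := by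
    push_cast
    field_simp
    ring
  have hroot : ((2 * ρ * σ) ^ (1 / ((n + 2 : ℕ) : ℝ))) ^ (n + 2) = 2 * ρ * σ := by
    rw [← ENNReal.rpow_natCast, one_div, ENNReal.rpow_inv_rpow (by positivity)]
  rw [hcast, hexp, ENNReal.rpow_mul, ENNReal.rpow_natCast, ENNReal.rpow_inv_le_iff (by positivity),
    ENNReal.rpow_natCast]
  calc (2 * (A * ρ) * β) ^ (n + 1)
      = A ^ (n + 1) * (2 * ρ * (2 * ρ) ^ n) * β ^ (n + 1) := by ring
    _ ≤ A ^ (n + 2) * (2 * ρ * (4 * ρ) ^ n) * β ^ (n + 1) := by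
        gcongr ?_ * (_ * (?_ * _) ^ _) * _
        · exact pow_le_pow_right₀ hA (by omega)
        · norm_num
    _ = A ^ (n + 2) * (2 * ρ * σ) * β ^ (n + 2) := by
        rw [← h]
        ring
    _ = (A * (2 * ρ * σ) ^ (1 / ((n + 2 : ℕ) : ℝ)) * β) ^ (n + 2) := by
        rw [mul_pow, mul_pow, hroot]

end Powers

section WeakNorm

variable {α : Type*} [MeasurableSpace α] {μ : Measure α}

lemma volume_setOf_pos_and_ofReal_lt (c : ℝ≥0∞) :
    volume {t : ℝ | 0 < t ∧ ENNReal.ofReal t < c} = c := by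
  induction c using ENNReal.recTopCoe with
  | top =>
    have : {t : ℝ | 0 < t ∧ ENNReal.ofReal t < ∞} = Set.Ioi 0 := by ext; simp
    rw [this, Real.volume_Ioi]
  | coe c =>
    have : {t : ℝ | 0 < t ∧ ENNReal.ofReal t < c} = Set.Ioo 0 (c : ℝ) := by
      ext t
      simp only [Set.mem_ofPred_eq, Set.mem_Ioo, and_congr_right_iff]
      exact fun ht => ENNReal.ofReal_lt_coe_iff ht.le
    rw [this, Real.volume_Ioo, sub_zero, ENNReal.ofReal_coe_nnreal]

lemma lintegral_eq_lintegral_measure_ofReal_lt [SFinite μ] {g : α → ℝ≥0∞} (hg : Measurable g) :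
    ∫⁻ x, g x ∂μ = ∫⁻ t in Set.Ioi (0 : ℝ), μ {x | ENNReal.ofReal t < g x} := by
  let S : Set (α × ℝ) := {p | 0 < p.2 ∧ ENNReal.ofReal p.2 < g p.1}
  have hS : MeasurableSet S :=
    (measurableSet_lt measurable_const measurable_snd).inter
      (measurableSet_lt (ENNReal.measurable_ofReal.comp measurable_snd) (hg.comp measurable_fst))
  calc ∫⁻ x, g x ∂μ = ∫⁻ x, volume (Prod.mk x ⁻¹' S) ∂μ :=
        lintegral_congr fun x => (volume_setOf_pos_and_ofReal_lt (g x)).symm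
    _ = ∫⁻ t, μ ((fun x => (x, t)) ⁻¹' S) := by
        rw [← Measure.prod_apply hS, Measure.prod_apply_symm hS]
    _ = ∫⁻ t in Set.Ioi (0 : ℝ), μ {x | ENNReal.ofReal t < g x} := by
        rw [← lintegral_indicator measurableSet_Ioi]
        refine lintegral_congr fun t => ?_
        by_cases ht : 0 < t <;> simp [S, ht]

lemma setLIntegral_Ioi_ofReal_rpow_neg {q a : ℝ} (hq : 1 < q) (ha : 0 < a) :
    ∫⁻ t in Set.Ioi a, ENNReal.ofReal (t ^ (-q)) = ENNReal.ofReal (a ^ (1 - q) / (q - 1)) := by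
  rw [← ofReal_integral_eq_lintegral_ofReal (integrableOn_Ioi_rpow_of_lt (by linarith) ha)
    (ae_restrict_of_forall_mem measurableSet_Ioi fun t ht =>
      Real.rpow_nonneg (ha.trans ht).le _), integral_Ioi_rpow_of_lt (by linarith) ha,
    neg_div, ← div_neg]
  ring_nf

/-- The weak `L^q` quasinorm `sup_{t>0} t μ{g > t}^{1/q}` of a nonnegative function on an arbitrary
measure space; on `Pt n` it is `weakN`. -/
def weakNorm (μ : Measure α) (q : ℝ) (g : α → ℝ≥0∞) : ℝ≥0∞ :=
  ⨆ (t : ℝ) (_ : 0 < t), ENNReal.ofReal t * μ {x | ENNReal.ofReal t < g x} ^ (1 / q)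

lemma measure_ofReal_lt_le_weakNorm_rpow {q : ℝ} (hq : 0 < q) (g : α → ℝ≥0∞) {t : ℝ} (ht : 0 < t) :
    μ {x | ENNReal.ofReal t < g x} ≤ weakNorm μ q g ^ q * ENNReal.ofReal (t ^ (-q)) := by
  have ht₀ : ENNReal.ofReal t ≠ 0 := by simpa using ht
  have hsup : ENNReal.ofReal t * μ {x | ENNReal.ofReal t < g x} ^ (1 / q) ≤ weakNorm μ q g :=
    le_iSup₂_of_le t ht le_rfl
  rw [mul_comm, ← ENNReal.le_div_iff_mul_le (.inl ht₀) (.inl ENNReal.ofReal_ne_top),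
    one_div, ENNReal.rpow_inv_le_iff hq, ENNReal.div_rpow_of_nonneg _ _ hq.le] at hsup
  rwa [← ENNReal.ofReal_rpow_of_pos ht, ENNReal.rpow_neg]

lemma setLIntegral_le_add_weakNorm_rpow [SFinite μ] {q : ℝ} (hq : 1 < q) {g : α → ℝ≥0∞}
    (hg : Measurable g) (s : Set α) {a : ℝ} (ha : 0 < a) :
    ∫⁻ x in s, g x ∂μ ≤
      ENNReal.ofReal a * μ s + weakNorm μ q g ^ q * ENNReal.ofReal (a ^ (1 - q) / (q - 1)) := by
  rw [lintegral_eq_lintegral_measure_ofReal_lt hg, ← Set.Ioc_union_Ioi_eq_Ioi ha.le,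
    lintegral_union measurableSet_Ioi (Set.Ioc_disjoint_Ioi le_rfl)]
  gcongr
  · calc ∫⁻ t in Set.Ioc 0 a, μ.restrict s {x | ENNReal.ofReal t < g x}
        ≤ ∫⁻ _ in Set.Ioc 0 a, μ s :=
          lintegral_mono fun t => (measure_mono (Set.subset_univ _)).trans_eq (by simp)
      _ = ENNReal.ofReal a * μ s := by simp [mul_comm]
  · calc ∫⁻ t in Set.Ioi a, μ.restrict s {x | ENNReal.ofReal t < g x}
        ≤ ∫⁻ t in Set.Ioi a, weakNorm μ q g ^ q * ENNReal.ofReal (t ^ (-q)) :=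
          setLIntegral_mono (by fun_prop) fun t ht =>
            (Measure.restrict_apply_le _ _).trans
              (measure_ofReal_lt_le_weakNorm_rpow (by linarith) g (ha.trans ht))
      _ = weakNorm μ q g ^ q * ENNReal.ofReal (a ^ (1 - q) / (q - 1)) := by
          rw [lintegral_const_mul _ (by fun_prop), setLIntegral_Ioi_ofReal_rpow_neg hq ha]

lemma weakNorm_bound_at_optimum {q m v : ℝ} (hq : 1 < q) (hm : 0 < m) (hv : 0 < v) :
    m * v ^ (-(1 / q)) * v + m ^ q * ((m * v ^ (-(1 / q))) ^ (1 - q) / (q - 1)) =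
      q / (q - 1) * m * v ^ (1 - 1 / q) := by
  have hq₀ : q ≠ 0 := by linarith
  have hq₁ : q - 1 ≠ 0 := by linarith
  have hv₁ : v ^ (-(1 / q)) * v = v ^ (1 - 1 / q) := by
    rw [← Real.rpow_add_one hv.ne']
    ring_nf
  have hv₂ : (v ^ (-(1 / q))) ^ (1 - q) = v ^ (1 - 1 / q) := by
    rw [← Real.rpow_mul hv.le]
    congr 1
    field_simp
    ring
  have hm₁ : m ^ q * m ^ (1 - q) = m := by
    rw [← Real.rpow_add hm, add_sub_cancel, Real.rpow_one]
  calc _ = m * (v ^ (-(1 / q)) * v) +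
          m ^ q * m ^ (1 - q) * (v ^ (-(1 / q))) ^ (1 - q) / (q - 1) := by
        rw [Real.mul_rpow hm.le (by positivity)]
        ring
    _ = q / (q - 1) * m * v ^ (1 - 1 / q) := by
        rw [hv₁, hv₂, hm₁]
        field_simp
        ring

lemma lintegral_eq_zero_of_weakNorm_eq_zero [SFinite μ] {q : ℝ} (hq : 0 < q) {g : α → ℝ≥0∞}
    (hg : Measurable g) (h : weakNorm μ q g = 0) : ∫⁻ x, g x ∂μ = 0 := by
  have hzero : ∀ t ∈ Set.Ioi (0 : ℝ), μ {x | ENNReal.ofReal t < g x} = 0 := fun t ht => by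
    simpa [h, hq] using measure_ofReal_lt_le_weakNorm_rpow (μ := μ) hq g ht
  rw [lintegral_eq_lintegral_measure_ofReal_lt hg,
    setLIntegral_congr_fun measurableSet_Ioi hzero, lintegral_zero]

lemma setLIntegral_le_weakNorm_mul_rpow [SFinite μ] {q : ℝ} (hq : 1 < q) {g : α → ℝ≥0∞}
    (hg : Measurable g) {s : Set α} (hs : μ s ≠ ∞) :
    ∫⁻ x in s, g x ∂μ ≤ ENNReal.ofReal (q / (q - 1)) * weakNorm μ q g * μ s ^ (1 - 1 / q) := by
  have hq' : 0 < q / (q - 1) := div_pos (by linarith) (by linarith)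
  rcases eq_or_ne (μ s) 0 with hs₀ | hs₀
  · simp [Measure.restrict_eq_zero.mpr hs₀]
  rcases eq_or_ne (weakNorm μ q g) 0 with hN₀ | hN₀
  · refine (setLIntegral_le_lintegral s g).trans ?_
    simp [lintegral_eq_zero_of_weakNorm_eq_zero (by linarith) hg hN₀]
  rcases eq_or_ne (weakNorm μ q g) ∞ with hN_top | hN_top
  · have hs_rpow : μ s ^ (1 - 1 / q) ≠ 0 := by simp [hs₀, hs]
    rw [hN_top, ENNReal.mul_top (by simpa using hq'), ENNReal.top_mul hs_rpow]
    exact le_top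
  -- Balance the two terms: take the splitting height `a = ‖g‖_{q,∞} μ(s)^{-1/q}`.
  obtain ⟨v, hv, hsv⟩ : ∃ v : ℝ, 0 < v ∧ μ s = ENNReal.ofReal v :=
    ⟨_, ENNReal.toReal_pos hs₀ hs, (ENNReal.ofReal_toReal hs).symm⟩
  obtain ⟨m, hm, hNm⟩ : ∃ m : ℝ, 0 < m ∧ weakNorm μ q g = ENNReal.ofReal m :=
    ⟨_, ENNReal.toReal_pos hN₀ hN_top, (ENNReal.ofReal_toReal hN_top).symm⟩
  have hsplit := setLIntegral_le_add_weakNorm_rpow (μ := μ) hq hg s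
    (show 0 < m * v ^ (-(1 / q)) by positivity)
  rwa [hsv, hNm, ENNReal.ofReal_rpow_of_pos hm, ← ENNReal.ofReal_mul (by positivity),
    ← ENNReal.ofReal_mul (by positivity), ← ENNReal.ofReal_add (by positivity) (by positivity),
    weakNorm_bound_at_optimum hq hm hv, ENNReal.ofReal_mul (by positivity),
    ENNReal.ofReal_mul hq'.le, ← ENNReal.ofReal_rpow_of_pos hv, ← hsv, ← hNm] at hsplit

end WeakNorm

section Box

variable {ι V : Type*} [Fintype ι] [NormedAddCommGroup V] [InnerProductSpace ℝ V]

/-- The open box of half-widths `r j` in the directions `b j`, centred at `a`. -/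
def orthoBox (b : OrthonormalBasis ι ℝ V) (a : V) (r : ι → ℝ) : Set V :=
  {v | ∀ j, |⟪v - a, b j⟫| < r j}

lemma isOpen_orthoBox (b : OrthonormalBasis ι ℝ V) (a : V) (r : ι → ℝ) :
    IsOpen (orthoBox b a r) := by
  simp only [orthoBox, Set.ofPred_forall]
  exact isOpen_iInter_of_finite fun j => isOpen_lt (by fun_prop) continuous_const

lemma volume_orthoBox [FiniteDimensional ℝ V] [MeasurableSpace V] [BorelSpace V]
    (b : OrthonormalBasis ι ℝ V) (a : V) (r : ι → ℝ) :
    volume (orthoBox b a r) = ∏ j, ENNReal.ofReal (2 * r j) := by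
  have hbox : orthoBox b a r = (WithLp.ofLp ∘ b.repr) ⁻¹'
      Set.univ.pi fun j => Metric.ball ⟪a, b j⟫ (r j) := by
    ext v
    simp [orthoBox, Real.dist_eq, inner_sub_left, b.repr_apply_apply, real_inner_comm]
  have hpres := (PiLp.volume_preserving_ofLp ι).comp b.measurePreserving_repr
  rw [hbox, hpres.measure_preimage
    (MeasurableSet.univ_pi fun _ => measurableSet_ball).nullMeasurableSet, volume_pi_pi]
  simp only [Real.volume_ball]

lemma volume_orthoBox_ne_top [FiniteDimensional ℝ V] [MeasurableSpace V] [BorelSpace V]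
    (b : OrthonormalBasis ι ℝ V) (a : V) (r : ι → ℝ) : volume (orthoBox b a r) ≠ ∞ := by
  rw [volume_orthoBox]
  exact ENNReal.prod_ne_top fun _ _ => ENNReal.ofReal_ne_top

lemma volume_orthoBox_ne_zero [FiniteDimensional ℝ V] [MeasurableSpace V] [BorelSpace V]
    (b : OrthonormalBasis ι ℝ V) (a : V) {r : ι → ℝ} (hr : ∀ j, 0 < r j) :
    volume (orthoBox b a r) ≠ 0 := by
  simpa [volume_orthoBox, Finset.prod_eq_zero_iff] using hr

lemma abs_inner_le_sum_mul (b : OrthonormalBasis ι ℝ V) {u v : V} {r s : ι → ℝ}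
    (hu : ∀ j, |⟪u, b j⟫| ≤ r j) (hv : ∀ j, |⟪v, b j⟫| ≤ s j) :
    |⟪u, v⟫| ≤ ∑ j, r j * s j := by
  rw [← b.sum_inner_mul_inner u v]
  refine (Finset.abs_sum_le_sum_abs _ _).trans (Finset.sum_le_sum fun j _ => ?_)
  rw [abs_mul, real_inner_comm v]
  exact mul_le_mul (hu j) (hv j) (abs_nonneg _) ((abs_nonneg _).trans (hu j))

lemma exists_orthonormalBasis_coe_eq [FiniteDimensional ℝ V] {e : ι → V} (he : Orthonormal ℝ e)
    (hcard : Fintype.card ι = Module.finrank ℝ V) :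
    ∃ b : OrthonormalBasis ι ℝ V, ⇑b = e :=
  ⟨OrthonormalBasis.mk he (he.linearIndependent.span_eq_top_of_card_eq_finrank' hcard).ge,
    OrthonormalBasis.coe_mk _ _⟩

lemma norm_sub_sq_add_norm_sub_sq (x y a b : V) :
    ‖x - y‖ ^ 2 + ‖b - a‖ ^ 2 = ‖x - b‖ ^ 2 + ‖y - a‖ ^ 2 - 2 * ⟪x - a, y - b⟫ := by
  simp only [← real_inner_self_eq_norm_sq, inner_sub_left, inner_sub_right,
    real_inner_comm x, real_inner_comm a]
  ring

end Box

section GraphTube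

variable {α : Type*}

/-- The vertical neighbourhood of half-width `h` of the graph of `φ` over `B`; both projections of
a ball `ℬ` have this shape. -/
def graphTube (φ : α → ℝ) (B : Set α) (h : ℝ) : Set (α × ℝ) :=
  {p | p.1 ∈ B ∧ |p.2 - φ p.1| < h}

lemma graphTube_eq_regionBetween (φ : α → ℝ) (B : Set α) (h : ℝ) :
    graphTube φ B h = regionBetween (fun x => φ x - h) (fun x => φ x + h) B := by
  ext p
  simp only [graphTube, regionBetween, Set.mem_ofPred_eq, Set.mem_Ioo, abs_sub_lt_iff]
  exact and_congr_right' ⟨fun h => ⟨by linarith, by linarith⟩, fun h => ⟨by linarith, by linarith⟩⟩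

variable [MeasurableSpace α] {φ : α → ℝ} {B : Set α}

lemma measurableSet_graphTube (hφ : Measurable φ) (hB : MeasurableSet B) (h : ℝ) :
    MeasurableSet (graphTube φ B h) := by
  rw [graphTube_eq_regionBetween]
  exact measurableSet_regionBetween (by fun_prop) (by fun_prop) hB

lemma prod_volume_graphTube {μ : Measure α} [SFinite μ] (hφ : Measurable φ)
    (hB : MeasurableSet B) (h : ℝ) :
    μ.prod volume (graphTube φ B h) = ENNReal.ofReal (2 * h) * μ B := by
  rw [graphTube_eq_regionBetween,
    volume_regionBetween_eq_lintegral (by fun_prop) (by fun_prop) hB, ← setLIntegral_const]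
  refine lintegral_congr fun x => ?_
  rw [Pi.sub_apply]
  ring_nf

end GraphTube

section Radon

variable {n : ℕ}

/-- The adjoint `T*f(y) = ∫ f(y' + t, y_d + |t|²) dt` of the Radon-like transform. -/
def radonTAdj (n : ℕ) (f : Pt n → ℝ≥0∞) (y : Pt n) : ℝ≥0∞ :=
  ∫⁻ t : Vec n, f (y.1 + t, y.2 + ‖t‖ ^ 2)

lemma measurable_radonT {f : Pt n → ℝ≥0∞} (hf : Measurable f) : Measurable (radonT n f) :=
  Measurable.lintegral_prod_right' (f := fun p : Pt n × Vec n => f (p.1.1 - p.2, p.1.2 - ‖p.2‖ ^ 2))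
    (by fun_prop)

lemma lintegral_radonT_mul {f g : Pt n → ℝ≥0∞} (hf : Measurable f) (hg : Measurable g) :
    ∫⁻ x, radonT n f x * g x = ∫⁻ y, f y * radonTAdj n g y := by
  calc ∫⁻ x, radonT n f x * g x
      = ∫⁻ x : Pt n, ∫⁻ t : Vec n, f (x - (t, ‖t‖ ^ 2)) * g x :=
        lintegral_congr fun x => (lintegral_mul_const _ (by fun_prop)).symm
    _ = ∫⁻ t : Vec n, ∫⁻ x : Pt n, f (x - (t, ‖t‖ ^ 2)) * g x :=
        lintegral_lintegral_swap (by fun_prop)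
    _ = ∫⁻ t : Vec n, ∫⁻ y : Pt n, f y * g (y + (t, ‖t‖ ^ 2)) :=
        lintegral_congr fun t => by
          rw [Measure.volume_eq_prod, ← lintegral_add_right_eq_self _ (t, ‖t‖ ^ 2)]
          simp only [add_sub_cancel_right]
    _ = ∫⁻ y : Pt n, ∫⁻ t : Vec n, f y * g (y + (t, ‖t‖ ^ 2)) :=
        lintegral_lintegral_swap (by fun_prop)
    _ = ∫⁻ y, f y * radonTAdj n g y :=
        lintegral_congr fun y => lintegral_const_mul _ (by fun_prop)

lemma incT_eq_setLIntegral_radonTAdj {E F : Set (Pt n)} (hE : MeasurableSet E)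
    (hF : MeasurableSet F) :
    incT n F E = ∫⁻ y in E, radonTAdj n (F.indicator 1) y := by
  have hmul : ∀ (S : Set (Pt n)) (f : Pt n → ℝ≥0∞), S.indicator f = S.indicator 1 * f :=
    fun S f => by ext x; by_cases hx : x ∈ S <;> simp [hx]
  rw [incT, ← lintegral_indicator hF, ← lintegral_indicator hE, hmul F (radonT n _),
    hmul E (radonTAdj n _), mul_comm]
  exact lintegral_radonT_mul (measurable_one.indicator hE) (measurable_one.indicator hF)

lemma volume_le_radonTAdj_indicator {F : Set (Pt n)} {B : Set (Vec n)} (hB : MeasurableSet B)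
    {y : Pt n} (h : ∀ x ∈ B, (x, y.2 + ‖x - y.1‖ ^ 2) ∈ F) :
    volume B ≤ radonTAdj n (F.indicator 1) y := by
  calc volume B = ∫⁻ x, B.indicator 1 x := (lintegral_indicator_one hB).symm
    _ ≤ ∫⁻ x, F.indicator 1 (x, y.2 + ‖x - y.1‖ ^ 2) := by
        refine lintegral_mono fun x => ?_
        by_cases hx : x ∈ B
        · simp [hx, h x hx]
        · simp [hx]
    _ = radonTAdj n (F.indicator 1) y := by
        rw [radonTAdj, ← lintegral_add_left_eq_self _ y.1]
        simp only [add_sub_cancel_left]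

lemma volume_mul_volume_le_incT {E F : Set (Pt n)} (hE : MeasurableSet E) (hF : MeasurableSet F)
    {B : Set (Vec n)} (hB : MeasurableSet B)
    (h : ∀ y ∈ E, ∀ x ∈ B, (x, y.2 + ‖x - y.1‖ ^ 2) ∈ F) :
    volume B * volume E ≤ incT n F E := by
  rw [incT_eq_setLIntegral_radonTAdj hE hF, ← setLIntegral_const]
  exact setLIntegral_mono' hE fun y hy => volume_le_radonTAdj_indicator hB (h y hy)

lemma incT_le_weakN {q : ℝ} (hq : 1 < q) {E F : Set (Pt n)} (hE : MeasurableSet E)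
    (hF : volume F ≠ ∞) :
    incT n F E ≤ ENNReal.ofReal (q / (q - 1)) * weakN n q (radonT n (E.indicator 1)) *
      volume F ^ (1 - 1 / q) :=
  setLIntegral_le_weakNorm_mul_rpow hq (measurable_radonT (measurable_one.indicator hE)) hF

end Radon

section Ball

variable {n : ℕ}

lemma image_snd_ballI {zb : Pt n × Pt n} {b : OrthonormalBasis (Fin n) ℝ (Vec n)}
    {r rs : Fin n → ℝ} {ρ : ℝ} (hp : IsBallParams n zb b r rs ρ) :
    Prod.snd '' ballI n zb b r rs ρ =
      graphTube (fun v => zb.1.2 - ‖v - zb.1.1‖ ^ 2) (orthoBox b zb.2.1 rs) ρ := by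
  obtain ⟨hzb, -, -, hr, -, -⟩ := hp
  ext y
  constructor
  · rintro ⟨z, ⟨-, -, -, hbox, hheight⟩, rfl⟩
    exact ⟨hbox, by rwa [← sub_add]⟩
  · rintro ⟨hbox, hheight⟩
    rw [← sub_add] at hheight
    refine ⟨((zb.1.1, y.2 + ‖y.1 - zb.1.1‖ ^ 2), y), ⟨?_, ?_, ?_, hbox, hheight⟩, rfl⟩
    · simp
    · simpa using hr
    · convert hheight using 2
      rw [hzb, norm_sub_rev zb.1.1]
      ring

/-- A `(2n + 1)ρ`-neighbourhood of the paraboloid over the box `{|⟨x' - x̄', e_j⟩| < r_j}` of which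
`π(ℬ)` is the `ρ`-neighbourhood. It is the test set on which `T χ_E` is integrated. -/
def enlargedProj (zb : Pt n × Pt n) (b : OrthonormalBasis (Fin n) ℝ (Vec n)) (r : Fin n → ℝ)
    (ρ : ℝ) : Set (Pt n) :=
  graphTube (fun v => zb.2.2 + ‖v - zb.2.1‖ ^ 2) (orthoBox b zb.1.1 r) ((2 * n + 1) * ρ)

lemma measurableSet_enlargedProj (zb : Pt n × Pt n) (b : OrthonormalBasis (Fin n) ℝ (Vec n))
    (r : Fin n → ℝ) (ρ : ℝ) : MeasurableSet (enlargedProj zb b r ρ) :=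
  measurableSet_graphTube (by fun_prop) (isOpen_orthoBox b _ _).measurableSet _

lemma volume_enlargedProj (zb : Pt n × Pt n) (b : OrthonormalBasis (Fin n) ℝ (Vec n))
    (r : Fin n → ℝ) (ρ : ℝ) :
    volume (enlargedProj zb b r ρ) =
      ENNReal.ofReal (2 * ((2 * n + 1) * ρ)) * volume (orthoBox b zb.1.1 r) :=
  prod_volume_graphTube (by fun_prop) (isOpen_orthoBox b _ _).measurableSet _

lemma mem_enlargedProj {zb : Pt n × Pt n}
    {b : OrthonormalBasis (Fin n) ℝ (Vec n)} {r rs : Fin n → ℝ} {ρ : ℝ}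
    (hp : IsBallParams n zb b r rs ρ) {y : Pt n} (hy : y ∈ Prod.snd '' ballI n zb b r rs ρ)
    {x : Vec n} (hx : x ∈ orthoBox b zb.1.1 r) :
    (x, y.2 + ‖x - y.1‖ ^ 2) ∈ enlargedProj zb b r ρ := by
  rw [image_snd_ballI hp] at hy
  obtain ⟨hy_box, hy_height⟩ := hy
  obtain ⟨hzb, -, -, -, -, hrr⟩ := hp
  have hinner : |⟪x - zb.1.1, y.1 - zb.2.1⟫| ≤ n * ρ := by
    simpa [hrr] using abs_inner_le_sum_mul b (fun j => (hx j).le) fun j => (hy_box j).le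
  have hheight : y.2 + ‖x - y.1‖ ^ 2 - (zb.2.2 + ‖x - zb.2.1‖ ^ 2) =
      (y.2 - (zb.1.2 - ‖y.1 - zb.1.1‖ ^ 2)) - 2 * ⟪x - zb.1.1, y.1 - zb.2.1⟫ := by
    linear_combination norm_sub_sq_add_norm_sub_sq x y.1 zb.1.1 zb.2.1 - hzb
  refine ⟨hx, ?_⟩
  calc |y.2 + ‖x - y.1‖ ^ 2 - (zb.2.2 + ‖x - zb.2.1‖ ^ 2)|
      ≤ |y.2 - (zb.1.2 - ‖y.1 - zb.1.1‖ ^ 2)| + |2 * ⟪x - zb.1.1, y.1 - zb.2.1⟫| := by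
        rw [hheight]
        exact abs_sub _ _
    _ < ρ + 2 * (n * ρ) := by
        rw [abs_mul, abs_two]
        exact add_lt_add_of_lt_of_le hy_height (by gcongr)
    _ = (2 * n + 1) * ρ := by ring

lemma volume_enlargedProj_rpow_le {zb : Pt n × Pt n} {b : OrthonormalBasis (Fin n) ℝ (Vec n)}
    {r rs : Fin n → ℝ} {ρ : ℝ} (hp : IsBallParams n zb b r rs ρ) :
    volume (enlargedProj zb b r ρ) ^ (1 - 1 / ((n : ℝ) + 2)) ≤
      ENNReal.ofReal (2 * n + 1) *
        volume (Prod.snd '' ballI n zb b r rs ρ) ^ (1 / ((n : ℝ) + 2)) *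
          volume (orthoBox b zb.1.1 r) := by
  rw [volume_enlargedProj, image_snd_ballI hp, Measure.volume_eq_prod,
    prod_volume_graphTube (by fun_prop) (isOpen_orthoBox b _ _).measurableSet,
    ENNReal.ofReal_mul zero_le_two, ENNReal.ofReal_mul (by positivity),
    ENNReal.ofReal_mul zero_le_two, ENNReal.ofReal_ofNat, volume_orthoBox, volume_orthoBox]
  obtain ⟨-, -, -, hr, -, hrr⟩ := hp
  refine rpow_one_sub_le_of_mul_eq_pow (by simp) ?_
  simpa using prod_ofReal_two_mul_mul_prod_ofReal_two_mul (fun j => (hr j).le) hrr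

lemma volume_le_mul_weakN {zb : Pt n × Pt n} {b : OrthonormalBasis (Fin n) ℝ (Vec n)}
    {r rs : Fin n → ℝ} {ρ : ℝ} (hp : IsBallParams n zb b r rs ρ) {E : Set (Pt n)}
    (hE : MeasurableSet E) (hsub : E ⊆ Prod.snd '' ballI n zb b r rs ρ) :
    volume E ≤ ENNReal.ofReal (((n : ℝ) + 2) / (n + 1) * (2 * n + 1)) *
      weakN n ((n : ℝ) + 2) (radonT n (E.indicator 1)) *
        volume (Prod.snd '' ballI n zb b r rs ρ) ^ (1 / ((n : ℝ) + 2)) := by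
  set B := orthoBox b zb.1.1 r
  set P := Prod.snd '' ballI n zb b r rs ρ
  set N := weakN n ((n : ℝ) + 2) (radonT n (E.indicator 1))
  set F := enlargedProj zb b r ρ
  have hB : MeasurableSet B := (isOpen_orthoBox b _ _).measurableSet
  have hF : MeasurableSet F := measurableSet_enlargedProj zb b r ρ
  have hB_zero : volume B ≠ 0 := volume_orthoBox_ne_zero b _ hp.2.2.2.1
  have hB_top : volume B ≠ ∞ := volume_orthoBox_ne_top b _ _
  have hF_top : volume F ≠ ∞ := by
    rw [volume_enlargedProj]
    exact ENNReal.mul_ne_top ENNReal.ofReal_ne_top hB_top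
  rw [← ENNReal.mul_le_mul_iff_right hB_zero hB_top]
  calc volume B * volume E
      ≤ incT n F E := volume_mul_volume_le_incT hE hF hB fun y hy x hx =>
        mem_enlargedProj hp (hsub hy) hx
    _ ≤ ENNReal.ofReal (((n : ℝ) + 2) / (n + 2 - 1)) * N * volume F ^ (1 - 1 / ((n : ℝ) + 2)) :=
        incT_le_weakN (by linarith [n.cast_nonneg (α := ℝ)]) hE hF_top
    _ ≤ ENNReal.ofReal (((n : ℝ) + 2) / (n + 2 - 1)) * N *
          (ENNReal.ofReal (2 * n + 1) * volume P ^ (1 / ((n : ℝ) + 2)) * volume B) := by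
        gcongr
        exact volume_enlargedProj_rpow_le hp
    _ = volume B * (ENNReal.ofReal (((n : ℝ) + 2) / (n + 1) * (2 * n + 1)) * N *
          volume P ^ (1 / ((n : ℝ) + 2))) := by
        rw [ENNReal.ofReal_mul (by positivity), show (n : ℝ) + 2 - 1 = n + 1 by ring]
        ring

end Ball

/-- Theorem thm:single (i), converse half: for any ball `ℬ` and
any `E ⊆ π*(ℬ)` of positive measure,
`‖T χ_E‖_{L^{d+1,∞}} ≥ c (|E|/|π*(ℬ)|)^C |E|^{d/(d+1)}`. -/
theorem stmt9 (d : ℕ) (hd : 2 ≤ d) :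
    ∃ c C : ℝ, 0 < c ∧ 0 < C ∧
      ∀ (zb : Pt (d - 1) × Pt (d - 1)) (e : Fin (d - 1) → Vec (d - 1))
        (r rs : Fin (d - 1) → ℝ) (ρ : ℝ), IsBallParams (d - 1) zb e r rs ρ →
      ∀ (E : Set (Pt (d - 1))), MeasurableSet E →
        E ⊆ Prod.snd '' ballI (d - 1) zb e r rs ρ → 0 < volume E →
        ENNReal.ofReal c *
            (volume E / volume (Prod.snd '' ballI (d - 1) zb e r rs ρ)) ^ C *
            volume E ^ ((d : ℝ) / (d + 1)) ≤
          weakN (d - 1) ((d : ℝ) + 1) (radonT (d - 1) (E.indicator 1)) := by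
  obtain ⟨n, rfl⟩ : ∃ n, d = n + 1 := ⟨d - 1, by omega⟩
  rw [show ((n + 1 : ℕ) : ℝ) + 1 = n + 2 by push_cast; ring]
  set p : ℝ := 1 / (n + 2) with hp_def
  have hp₀ : 0 < p := by positivity
  have hp₁ : p ≤ 1 := (div_le_one (by positivity)).mpr (by linarith [n.cast_nonneg (α := ℝ)])
  have hexp : ((n + 1 : ℕ) : ℝ) / (n + 2) = 1 - p := by
    rw [hp_def]
    push_cast
    field_simp
    ring
  let K : ℝ := (n + 2) / (n + 1) * (2 * n + 1)
  have hK : 0 < K := by positivity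
  refine ⟨K⁻¹, p, by positivity, hp₀, fun zb e r rs ρ hball E hE hsub _ => ?_⟩
  obtain ⟨b, rfl⟩ := exists_orthonormalBasis_coe_eq hball.2.2.1 (by simp)
  rw [hexp, mul_assoc, div_rpow_mul_rpow_one_sub hp₀.le hp₁, ENNReal.ofReal_inv_of_pos hK,
    ENNReal.inv_mul_le_iff (by simpa using hK) ENNReal.ofReal_ne_top]
  exact ENNReal.div_le_of_le_mul (volume_le_mul_weakN hball hE hsub)
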